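/- Correctness of the DC encoding T_ham(G) of Hamiltonicity: let V be a finite nonempty type, E ⊆ V × V a set of edges, s ∈ V a fixed starting vertex, and F ⊆ E. Then F is the edge set of a Hamiltonian cycle of the directed graph (V, E) — i.e., with n = |V| there is a bijection v : Fin n → V such that F = {(v i, v (i + 1 mod n)) | i ∈ Fin n} — if and only if (a) every vertex of V has exactly one outgoing edge in F and exactly one incoming edge in F, and (b) every vertex t ∈ V is F-reachable from s by a nonempty path (Relation.TransGen (fun a b => (a, b) ∈ F) s t). Consequently, Hamiltonian cycles of G correspond exactly to the answer sets of the DC theory T_ham(G) = (T_C, T_H, T_PC). -/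

import Mathlib

/-!
A relation with out-degree one is the graph of a map `f`, and the points reachable from `s` by a
nonempty path are the iterates `f^[k + 1] s`. If these are all the vertices, then `s` itself is
periodic, so `s, f s, f^[2] s, …` runs through every vertex exactly once per period: this already
forces the vertex set to be finite and the in-degrees to be one. Conversely, the edge set of a cycle
is the graph of a permutation conjugate to the rotation of `Fin n`.
-/

open Function Relation

theorem finRotate_apply_eq_mk_mod {n : ℕ} (i : Fin n) (hn : 0 < n) :
    finRotate n i = ⟨(i.1 + 1) % n, Nat.mod_lt _ hn⟩ := by
  have : NeZero n := ⟨hn.ne'⟩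
  ext
  rw [finRotate_apply, Fin.val_add, Fin.val_one', Nat.add_mod_mod]

theorem exists_finRotate_iterate_succ_eq {n : ℕ} (i j : Fin n) :
    ∃ k : ℕ, (finRotate n)^[k + 1] i = j := by
  have := i.neZero
  refine ⟨(j - i - 1 : Fin n), ?_⟩
  rw [iterate_succ_apply', ← finCycle_eq_finRotate_iterate, finCycle_apply, finRotate_apply]
  abel

section Graph

variable {V : Type*} {f : V → V} {s : V}

theorem transGen_graph_iff {t : V} :
    TransGen (fun a b => (a, b) ∈ f.graph) s t ↔ ∃ k : ℕ, f^[k + 1] s = t := by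
  constructor
  · intro h
    induction h with
    | single hab => exact ⟨0, hab⟩
    | tail _ hbc ih =>
      obtain ⟨k, rfl⟩ := ih
      exact ⟨k + 1, (iterate_succ_apply' f (k + 1) s).trans hbc⟩
  · rintro ⟨k, rfl⟩
    induction k with
    | zero => exact .single rfl
    | succ k ih => exact ih.tail (iterate_succ_apply' f (k + 1) s).symm

/-- The edges `(v i, v (i + 1))` of the closed walk through `v 0, …, v (n - 1)`, with indices taken
modulo `n`. When `v` is a bijection, this is the edge set of a Hamiltonian cycle on `V`. -/
def cycleEdges {n : ℕ} (v : Fin n → V) : Set (V × V) :=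
  Set.range fun i => (v i, v (finRotate n i))

theorem cycleEdges_eq_setOf_mod {n : ℕ} (hn : 0 < n) (v : Fin n → V) :
    cycleEdges v = {p | ∃ i : Fin n, p = (v i, v ⟨(i.1 + 1) % n, Nat.mod_lt _ hn⟩)} := by
  ext p
  simp only [cycleEdges, Set.mem_range, Set.mem_ofPred_eq, finRotate_apply_eq_mk_mod _ hn,
    eq_comm (a := p)]

theorem cycleEdges_eq_graph {n : ℕ} {v : Fin n → V} (hv : Surjective v)
    (hvf : Semiconj v (finRotate n) f) : cycleEdges v = f.graph := by
  ext ⟨x, y⟩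
  simp only [cycleEdges, Set.mem_range, Prod.mk.injEq, hvf.eq, mem_graph]
  constructor
  · rintro ⟨i, rfl, hy⟩
    exact hy
  · intro hy
    obtain ⟨i, rfl⟩ := hv x
    exact ⟨i, rfl, hy⟩

theorem exists_permCongr_finRotate_iterate_succ_eq {n : ℕ} (v : Fin n ≃ V) (s t : V) :
    ∃ k : ℕ, (v.permCongr (finRotate n))^[k + 1] s = t := by
  obtain ⟨i, rfl⟩ := v.surjective s
  obtain ⟨j, rfl⟩ := v.surjective t
  obtain ⟨k, rfl⟩ := exists_finRotate_iterate_succ_eq i j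
  exact ⟨k, ((v.semiconj_conj (finRotate n)).iterate_right (k + 1) i).symm⟩

/-- The first period of the orbit of `s` under `f`, listed from `s` on. It is the empty family if
`s` is not a periodic point. -/
def orbitEnum (f : V → V) (s : V) (i : Fin (minimalPeriod f s)) : V :=
  f^[i] s

theorem injective_orbitEnum : Injective (orbitEnum f s) :=
  fun i j hij => Fin.ext (iterate_injOn_Iio_minimalPeriod i.2 j.2 hij)

theorem semiconj_orbitEnum : Semiconj (orbitEnum f s) (finRotate _) f := by
  intro i
  rw [finRotate_apply_eq_mk_mod i i.pos, orbitEnum, orbitEnum, iterate_mod_minimalPeriod_eq,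
    iterate_succ_apply']

theorem surjective_orbitEnum (hreach : ∀ t, ∃ k : ℕ, f^[k + 1] s = t) :
    Surjective (orbitEnum f s) := by
  obtain ⟨p, hp⟩ := hreach s
  have hpos : 0 < minimalPeriod f s := IsPeriodicPt.minimalPeriod_pos p.succ_pos hp
  intro t
  obtain ⟨k, rfl⟩ := hreach t
  exact ⟨⟨(k + 1) % _, Nat.mod_lt _ hpos⟩, iterate_mod_minimalPeriod_eq⟩

theorem exists_equiv_cycleEdges_eq_graph (hreach : ∀ t, ∃ k : ℕ, f^[k + 1] s = t) :
    ∃ (n : ℕ) (v : Fin n ≃ V), f.graph = cycleEdges v :=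
  have hsurj := surjective_orbitEnum hreach
  ⟨_, .ofBijective (orbitEnum f s) ⟨injective_orbitEnum, hsurj⟩,
    (cycleEdges_eq_graph hsurj semiconj_orbitEnum).symm⟩

end Graph

theorem dc_ham_encoding_correct_general {V : Type*} (s : V) (F : Set (V × V)) :
    [∃ (n : ℕ) (v : Fin n ≃ V), F = cycleEdges v,
      ((∀ x : V, ∃! u : V, (x, u) ∈ F) ∧ (∀ x : V, ∃! w : V, (w, x) ∈ F)) ∧
        ∀ t : V, TransGen (fun a b => (a, b) ∈ F) s t,
      (∀ x : V, ∃! u : V, (x, u) ∈ F) ∧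
        ∀ t : V, TransGen (fun a b => (a, b) ∈ F) s t].TFAE := by
  tfae_have 1 → 2 := by
    rintro ⟨n, v, rfl⟩
    have hgraph : cycleEdges v = graph (v.permCongr (finRotate n)) :=
      cycleEdges_eq_graph v.surjective (v.semiconj_conj (finRotate n))
    rw [hgraph]
    exact ⟨⟨fun _ => existsUnique_eq', (v.permCongr (finRotate n)).bijective.existsUnique⟩,
      fun t => transGen_graph_iff.2 (exists_permCongr_finRotate_iterate_succ_eq v s t)⟩
  tfae_have 2 → 3 := fun ⟨⟨hout, _⟩, hreach⟩ => ⟨hout, hreach⟩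
  tfae_have 3 → 1 := by
    rintro ⟨hout, hreach⟩
    obtain ⟨f, rfl, -⟩ := (SetRel.exists_graph_eq_iff F).2 hout
    exact exists_equiv_cycleEdges_eq_graph fun t => transGen_graph_iff.1 (hreach t)
  tfae_finish

/-- Correctness of the DC encoding `T_ham(G)` of Hamiltonicity: a subset `F` of the
edges of a finite directed graph `(V, E)` is the edge set of a Hamiltonian cycle if
and only if every vertex has exactly one outgoing and exactly one incoming edge in
`F` (the constraints `T_C`) and every vertex is `F`-reachable from the starting
vertex `s` by a nonempty path (the post-constraints `T_PC` on the closure under the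
Horn rules `T_H`). -/
theorem dc_ham_encoding_correct
    (V : Type*) [Fintype V] [Nonempty V] (E : Set (V × V)) (s : V)
    (F : Set (V × V)) (hFE : F ⊆ E) :
    (∃ v : Fin (Fintype.card V) → V, Function.Bijective v ∧
      F = {p : V × V | ∃ i : Fin (Fintype.card V),
        p = (v i, v ⟨(i.1 + 1) % Fintype.card V, Nat.mod_lt _ Fintype.card_pos⟩)}) ↔
    (((∀ x : V, ∃! u : V, (x, u) ∈ F) ∧ (∀ x : V, ∃! w : V, (w, x) ∈ F)) ∧
     (∀ t : V, Relation.TransGen (fun a b => (a, b) ∈ F) s t)) := by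
  refine Iff.trans ?_ ((dc_ham_encoding_correct_general s F).out 0 1)
  simp only [← cycleEdges_eq_setOf_mod Fintype.card_pos]
  constructor
  · rintro ⟨v, hv, hF⟩
    exact ⟨_, .ofBijective v hv, hF⟩
  · rintro ⟨n, v, hF⟩
    obtain rfl : n = Fintype.card V := by simpa using Fintype.card_congr v
    exact ⟨v, v.bijective, hF⟩
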